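/- arXiv:1602.07603 — 2 statements merged into one kernel-verified Lean document; each statement's English description precedes it below -/
import Mathlib

section
/- The sequence (λ_g)_{g ≥ 1} is strictly monotonically increasing: for all integers 1 ≤ g < h one has λ_g < λ_h. -/
/-- `lambdaPenner g` is the number `λ_g` from the paper:
`λ_g = 2 - cos((2g-1)π/(2g+1)) + √(3 - 4·cos((2g-1)π/(2g+1)) + cos²((2g-1)π/(2g+1)))`. -/
noncomputable def lambdaPenner (g : ℕ) : ℝ :=
  2 - Real.cos ((2 * (g : ℝ) - 1) / (2 * (g : ℝ) + 1) * Real.pi)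
    + Real.sqrt (3 - 4 * Real.cos ((2 * (g : ℝ) - 1) / (2 * (g : ℝ) + 1) * Real.pi)
        + Real.cos ((2 * (g : ℝ) - 1) / (2 * (g : ℝ) + 1) * Real.pi) ^ 2)

/-- The sequence `(λ_g)_(g ≥ 1)` is strictly monotonically increasing:
for all integers `1 ≤ g < h` one has `λ_g < λ_h`. -/
theorem lambdaPenner_strictMono (g h : ℕ) (hg : 1 ≤ g) (hgh : g < h) :
    lambdaPenner g < lambdaPenner h := by
  have hg' : (1 : ℝ) ≤ g := by exact_mod_cast hg
  have hh' : (g : ℝ) < h := by exact_mod_cast hgh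
  -- The angle increases with the index and stays in `[0, π]`, where cosine is decreasing.
  have hc : Real.cos ((2 * (h : ℝ) - 1) / (2 * (h : ℝ) + 1) * Real.pi)
      < Real.cos ((2 * (g : ℝ) - 1) / (2 * (g : ℝ) + 1) * Real.pi) := by
    apply Real.cos_lt_cos_of_nonneg_of_le_pi
    · exact mul_nonneg (div_nonneg (by linarith) (by linarith)) Real.pi_pos.le
    · refine mul_le_of_le_one_left Real.pi_pos.le ?_
      rw [div_le_one (by linarith)]
      linarith
    · refine mul_lt_mul_of_pos_right ?_ Real.pi_pos
      rw [div_lt_div_iff₀ (by linarith) (by linarith)]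
      nlinarith
  have h1 := Real.cos_le_one ((2 * (g : ℝ) - 1) / (2 * (g : ℝ) + 1) * Real.pi)
  unfold lambdaPenner
  generalize Real.cos ((2 * (h : ℝ) - 1) / (2 * (h : ℝ) + 1) * Real.pi) = y at *
  generalize Real.cos ((2 * (g : ℝ) - 1) / (2 * (g : ℝ) + 1) * Real.pi) = x at *
  -- The radicand is `(2 - c) ^ 2 - 1`, which is decreasing in `c` for `c ≤ 1`.
  have hs : Real.sqrt (3 - 4 * x + x ^ 2) ≤ Real.sqrt (3 - 4 * y + y ^ 2) :=
    Real.sqrt_le_sqrt (by nlinarith)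
  linarith
end

section
/- Let X be a p×q complex matrix, let A be the (p+q)×(p+q) block matrix with blocks [[0, X], [Xᵀ, 0]], and let M be the (p+q)×(p+q) block matrix [[I + X·Xᵀ, X], [Xᵀ, I]] (so M = (I + R_P)(I + R_Q), where P is the first block of indices and Q the second). Then every eigenvalue λ of M is nonzero, and for every eigenvalue λ of M there exists an eigenvalue α of A such that λ + λ⁻¹ = 2 + α². -/
open Matrix

/-!
Suppose `M (x, y) = λ (x, y)`. The second block row gives `Xᵀ x = (λ - 1) y`; substituting
`Xᵀ x + y = λ y` into the first gives `λ X y = (λ - 1) x`. If `λ = 0` these force `x = 0`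
and then `y = 0`, so `λ ≠ 0`. Otherwise `(x, y)` is an eigenvector of
`A²` with eigenvalue `(λ - 1)² / λ = λ + λ⁻¹ - 2`, and by spectral mapping over `ℂ` this number
is the square of an eigenvalue `α` of `A`.
-/

/-- Spectrum of a complex matrix described by eigenvectors. -/
lemma mem_spectrum_iff_exists_mulVec {n : Type*} [Fintype n] [DecidableEq n]
    (B : Matrix n n ℂ) (μ : ℂ) : μ ∈ spectrum ℂ B ↔ ∃ v, v ≠ 0 ∧ B *ᵥ v = μ • v := by
  rw [← Matrix.spectrum_toLin', ← Module.End.hasEigenvalue_iff_mem_spectrum]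
  constructor
  · intro h
    obtain ⟨v, hv⟩ := h.exists_hasEigenvector
    exact ⟨v, hv.2, by simpa using hv.apply_eq_smul⟩
  · rintro ⟨v, hv, h⟩
    exact Module.End.hasEigenvalue_of_hasEigenvector
      ⟨Module.End.mem_eigenspace_iff.2 (by simpa using h), hv⟩

/-- Let `X` be a `p × q` complex matrix, let `A = [[0, X], [Xᵀ, 0]]` and
`M = [[I + X·Xᵀ, X], [Xᵀ, I]]` (this is `(I + R_P)(I + R_Q)` for the bipartite pattern
`A`).  Then every eigenvalue `λ` of `M` is nonzero, and for every eigenvalue `λ` of `M`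
there is an eigenvalue `α` of `A` with `λ + λ⁻¹ = 2 + α²`. -/
theorem penner_block_eigenvalue_relation (p q : ℕ) (X : Matrix (Fin p) (Fin q) ℂ) :
    ∀ lam ∈ spectrum ℂ
        (Matrix.fromBlocks (1 + X * Xᵀ) X Xᵀ 1 :
          Matrix (Fin p ⊕ Fin q) (Fin p ⊕ Fin q) ℂ),
      lam ≠ 0 ∧
      ∃ α ∈ spectrum ℂ
          (Matrix.fromBlocks 0 X Xᵀ 0 : Matrix (Fin p ⊕ Fin q) (Fin p ⊕ Fin q) ℂ),
        lam + lam⁻¹ = 2 + α ^ 2 := by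
  intro lam hlam
  obtain ⟨v, hv, h⟩ := (mem_spectrum_iff_exists_mulVec _ _).1 hlam
  obtain ⟨x, y, rfl⟩ : ∃ x y, v = Sum.elim x y :=
    ⟨v ∘ Sum.inl, v ∘ Sum.inr, (Sum.elim_comp_inl_inr v).symm⟩
  rw [fromBlocks_mulVec] at h
  have h1 : x + X *ᵥ (Xᵀ *ᵥ x) + X *ᵥ y = lam • x := by
    funext i
    simpa [add_mulVec, mulVec_mulVec] using congrFun h (Sum.inl i)
  have h2 : Xᵀ *ᵥ x = (lam - 1) • y := by
    funext i
    have := congrFun h (Sum.inr i)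
    simp only [Sum.elim_inr, Pi.add_apply, Pi.smul_apply, Sum.elim_comp_inl, Sum.elim_comp_inr,
      one_mulVec, smul_eq_mul] at this
    simp [sub_mul, ← this]
  have h3 : lam • (X *ᵥ y) = (lam - 1) • x := by
    rw [h2, mulVec_smul] at h1
    linear_combination (norm := module) h1
  have h0 : lam ≠ 0 := by
    rintro rfl
    have hx : x = 0 := by simpa using h3.symm
    have hy : y = 0 := by simpa [hx] using h2.symm
    subst hx hy
    exact hv (by ext i; cases i <;> rfl)
  have h4 : X *ᵥ y = ((lam - 1) / lam) • x := by
    rw [div_eq_inv_mul, mul_smul, ← h3, inv_smul_smul₀ h0]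
  refine ⟨h0, ?_⟩
  have hsq : lam + lam⁻¹ - 2 ∈ spectrum ℂ
      ((fromBlocks 0 X Xᵀ 0 : Matrix (Fin p ⊕ Fin q) (Fin p ⊕ Fin q) ℂ) ^ 2) := by
    refine (mem_spectrum_iff_exists_mulVec _ _).2 ⟨_, hv, ?_⟩
    rw [pow_two, ← mulVec_mulVec, fromBlocks_mulVec, fromBlocks_mulVec]
    have e : lam + lam⁻¹ - 2 = (lam - 1) * ((lam - 1) / lam) := by field_simp; ring
    rw [e]
    ext (i | i)
    · simp [h2, h4, mulVec_smul, mul_assoc]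
    · simp [h2, h4, mulVec_smul]
      ring
  rw [spectrum.map_pow_of_pos _ two_pos] at hsq
  obtain ⟨α, hα, e⟩ := hsq
  exact ⟨α, hα, by linear_combination -e⟩
end
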